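/- arXiv:2405.07080 — 4 statements merged into one kernel-verified Lean document; each statement's English description precedes it below -/
import Mathlib

section
/- Let p be a prime, n ≥ 2, and let q : 𝓗(pⁿ) → 𝓗(pⁿ⁻¹) be componentwise reduction modulo pⁿ⁻¹. For every subgroup H of 𝓗(pⁿ): H is contained in the center Z(𝓗(pⁿ)) if and only if P(H) = C(H), where P(H) = P(H; q). -/
theorem pc_mem_ker_iff {G K : Type*} [Group G] [Group K] (q : G →* K) (s g : G) :
    s⁻¹ * g⁻¹ * s * g ∈ q.ker ↔ Commute (q s) (q g) := by
  rw [MonoidHom.mem_ker]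
  simp only [map_mul, map_inv]
  rw [mul_assoc, ← mul_inv_rev, inv_mul_eq_one, commute_iff_eq]
  exact eq_comm

/-- The `q`-pseudocentralizer of a subset `S` of `G`:
all `g` such that `[s, g] = s⁻¹ * g⁻¹ * s * g ∈ ker q` for all `s ∈ S`. -/
def pseudocentralizer {G K : Type*} [Group G] [Group K] (q : G →* K) (S : Set G) :
    Subgroup G where
  carrier := {g : G | ∀ s ∈ S, s⁻¹ * g⁻¹ * s * g ∈ q.ker}
  one_mem' := fun s _ => by
    rw [pc_mem_ker_iff, map_one]
    exact Commute.one_right _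
  mul_mem' := fun {a b} ha hb s hs => by
    rw [pc_mem_ker_iff, map_mul]
    exact ((pc_mem_ker_iff q s a).mp (ha s hs)).mul_right ((pc_mem_ker_iff q s b).mp (hb s hs))
  inv_mem' := fun {a} ha s hs => by
    rw [pc_mem_ker_iff, map_inv]
    exact ((pc_mem_ker_iff q s a).mp (ha s hs)).inv_right

theorem mem_pseudocentralizer_iff {G K : Type*} [Group G] [Group K] {q : G →* K} {S : Set G}
    {g : G} : g ∈ pseudocentralizer q S ↔ ∀ s ∈ S, s⁻¹ * g⁻¹ * s * g ∈ q.ker := Iff.rfl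

/-- The mod `r` Heisenberg group, as triples `(x, y, z)` over `ZMod r`. -/
@[ext]
structure Heis (r : ℕ) where
  x : ZMod r
  y : ZMod r
  z : ZMod r

namespace Heis

variable {r : ℕ}

private def hmul (a b : Heis r) : Heis r := ⟨a.x + b.x, a.y + b.y + a.x * b.z, a.z + b.z⟩
private def hone : Heis r := ⟨0, 0, 0⟩
private def hinv (a : Heis r) : Heis r := ⟨-a.x, a.x * a.z - a.y, -a.z⟩

instance : Group (Heis r) where
  mul := hmul
  one := hone
  inv := hinv
  mul_assoc a b c := by
    show hmul (hmul a b) c = hmul a (hmul b c)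
    ext <;> (dsimp [hmul]; ring)
  one_mul a := by
    show hmul hone a = a
    ext <;> (dsimp [hmul, hone]; ring)
  mul_one a := by
    show hmul a hone = a
    ext <;> (dsimp [hmul, hone]; ring)
  inv_mul_cancel a := by
    show hmul (hinv a) a = hone
    ext <;> (dsimp [hmul, hinv, hone]; ring)

@[simp] theorem mul_x (a b : Heis r) : (a * b).x = a.x + b.x := rfl
@[simp] theorem mul_y (a b : Heis r) : (a * b).y = a.y + b.y + a.x * b.z := rfl
@[simp] theorem mul_z (a b : Heis r) : (a * b).z = a.z + b.z := rfl
@[simp] theorem one_x : (1 : Heis r).x = 0 := rfl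
@[simp] theorem one_y : (1 : Heis r).y = 0 := rfl
@[simp] theorem one_z : (1 : Heis r).z = 0 := rfl
@[simp] theorem inv_x (a : Heis r) : (a⁻¹).x = -a.x := rfl
@[simp] theorem inv_y (a : Heis r) : (a⁻¹).y = a.x * a.z - a.y := rfl
@[simp] theorem inv_z (a : Heis r) : (a⁻¹).z = -a.z := rfl

/-- Componentwise reduction `Heis r → Heis s` when `s ∣ r`. -/
def heisMap {r s : ℕ} (h : s ∣ r) : Heis r →* Heis s where
  toFun a := ⟨ZMod.castHom h (ZMod s) a.x, ZMod.castHom h (ZMod s) a.y, ZMod.castHom h (ZMod s) a.z⟩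
  map_one' := by
    ext <;> simp only [one_x, one_y, one_z, map_zero]
  map_mul' a b := by
    ext <;> simp only [mul_x, mul_y, mul_z, map_add, map_mul]

end Heis

/-- Componentwise reduction modulo `p ^ (n - 1)` from `Heis (p ^ n)` to `Heis (p ^ (n - 1))`. -/
def heisQ (p n : ℕ) : Heis (p ^ n) →* Heis (p ^ (n - 1)) :=
  Heis.heisMap (pow_dvd_pow p (Nat.sub_le n 1))

namespace Heis

variable {r : ℕ}

theorem commute_iff (a b : Heis r) : Commute a b ↔ a.x * b.z = b.x * a.z := by
  rw [commute_iff_eq, Heis.ext_iff]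
  simp only [mul_x, mul_y, mul_z]
  constructor
  · rintro ⟨-, h, -⟩
    linear_combination h
  · intro h
    exact ⟨add_comm _ _, by linear_combination h, add_comm _ _⟩

theorem mem_center_of_x_eq_zero_of_z_eq_zero {a : Heis r} (hx : a.x = 0) (hz : a.z = 0) :
    a ∈ Subgroup.center (Heis r) := by
  rw [Subgroup.mem_center_iff]
  intro g
  exact ((commute_iff g a).mpr (by simp [hx, hz])).eq

end Heis

/-- An element of `ZMod (p ^ n)` killed by `p` vanishes modulo `p ^ (n - 1)`. -/
theorem castHom_eq_zero_of_prime_mul_eq_zero {p n : ℕ} (hp : p.Prime) (hn : 1 ≤ n)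
    (h : p ^ (n - 1) ∣ p ^ n) {u : ZMod (p ^ n)} (hu : (p : ZMod (p ^ n)) * u = 0) :
    ZMod.castHom h (ZMod (p ^ (n - 1))) u = 0 := by
  obtain ⟨m, rfl⟩ := ZMod.intCast_surjective u
  obtain ⟨n, rfl⟩ := Nat.exists_eq_add_of_le' hn
  rw [map_intCast, ZMod.intCast_zmod_eq_zero_iff_dvd]
  have hdvd : ((p ^ (n + 1) : ℕ) : ℤ) ∣ (p : ℤ) * m := by
    rw [← ZMod.intCast_zmod_eq_zero_iff_dvd]
    exact_mod_cast hu
  rw [pow_succ', Nat.cast_mul] at hdvd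
  exact (mul_dvd_mul_iff_left (by exact_mod_cast hp.ne_zero)).mp hdvd

/-- If `p` kills the commutator pairing of `g` with every element of `S`, then `g` lies in the
pseudocentralizer of `S`. -/
theorem mem_pseudocentralizer_heisQ {p n : ℕ} (hp : p.Prime) (hn : 1 ≤ n)
    {S : Set (Heis (p ^ n))} {g : Heis (p ^ n)}
    (h : ∀ s ∈ S, (p : ZMod (p ^ n)) * (s.x * g.z - g.x * s.z) = 0) :
    g ∈ pseudocentralizer (heisQ p n) S := by
  rw [mem_pseudocentralizer_iff]
  intro s hs
  rw [pc_mem_ker_iff, Heis.commute_iff]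
  have hcast := castHom_eq_zero_of_prime_mul_eq_zero hp hn
    (pow_dvd_pow p (Nat.sub_le n 1)) (h s hs)
  rw [map_sub, map_mul, map_mul, sub_eq_zero] at hcast
  exact hcast

/-- If the pseudocentralizer of `S` is contained in its centralizer, then every power of `p`
kills the noncentral coordinates of the elements of `S`. -/
theorem pow_mul_eq_zero_of_pseudocentralizer_le {p n : ℕ} (hp : p.Prime) (hn : 1 ≤ n)
    {S : Set (Heis (p ^ n))} (hS : pseudocentralizer (heisQ p n) S ≤ Subgroup.centralizer S)
    {k : ℕ} (hk : k ≤ n) :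
    ∀ s ∈ S, (p : ZMod (p ^ n)) ^ k * s.x = 0 ∧ (p : ZMod (p ^ n)) ^ k * s.z = 0 := by
  induction hk using Nat.decreasingInduction with
  | self =>
    intro s _
    have hpow : (p : ZMod (p ^ n)) ^ n = 0 := by exact_mod_cast ZMod.natCast_self (p ^ n)
    simp [hpow]
  | of_succ k _ ih =>
    have pairing : ∀ g ∈ pseudocentralizer (heisQ p n) S, ∀ s ∈ S, s.x * g.z = g.x * s.z :=
      fun g hg s hs => (Heis.commute_iff s g).mp (Subgroup.mem_centralizer_iff.mp (hS hg) s hs)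
    intro s hs
    constructor
    · have hg : (⟨0, 0, (p : ZMod (p ^ n)) ^ k⟩ : Heis (p ^ n)) ∈
          pseudocentralizer (heisQ p n) S :=
        mem_pseudocentralizer_heisQ hp hn fun t ht => by
          linear_combination (ih t ht).1
      linear_combination pairing _ hg s hs
    · have hg : (⟨(p : ZMod (p ^ n)) ^ k, 0, 0⟩ : Heis (p ^ n)) ∈
          pseudocentralizer (heisQ p n) S :=
        mem_pseudocentralizer_heisQ hp hn fun t ht => by
          linear_combination -(ih t ht).2
      linear_combination -pairing _ hg s hs

/-- for every subgroup `H ≤ 𝓗(pⁿ)`: `H ≤ Z(𝓗(pⁿ))` iff `P(H) = C(H)`. -/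
theorem statement7 (p n : ℕ) (hp : p.Prime) (hn : 2 ≤ n) (H : Subgroup (Heis (p ^ n))) :
    H ≤ Subgroup.center (Heis (p ^ n)) ↔
      pseudocentralizer (heisQ p n) (H : Set (Heis (p ^ n))) =
        Subgroup.centralizer (H : Set (Heis (p ^ n))) := by
  constructor
  · intro hH
    have comm : ∀ g : Heis (p ^ n), ∀ s ∈ H, Commute s g := fun g s hs =>
      (Subgroup.mem_center_iff.mp (hH hs) g).symm
    ext g
    exact iff_of_true
      (mem_pseudocentralizer_iff.mpr fun s hs =>
        (pc_mem_ker_iff _ s g).mpr ((comm g s hs).map (heisQ p n)))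
      (Subgroup.mem_centralizer_iff.mpr fun s hs => (comm g s hs).eq)
  · intro h s hs
    obtain ⟨hx, hz⟩ := pow_mul_eq_zero_of_pseudocentralizer_le hp (one_le_two.trans hn) h.le
      (Nat.zero_le n) s hs
    rw [pow_zero, one_mul] at hx hz
    exact Heis.mem_center_of_x_eq_zero_of_z_eq_zero hx hz
end

section
/- Let p be a prime, n ≥ 2, and let q : 𝓗(pⁿ) → 𝓗(pⁿ⁻¹) be componentwise reduction modulo pⁿ⁻¹. If h ∈ 𝓗(pⁿ) is a non-central element, then |C(h)| = p² · |C(q(h))|, where C(h) is the centralizer of h in 𝓗(pⁿ) and C(q(h)) is the centralizer of q(h) in 𝓗(pⁿ⁻¹). -/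
namespace Heis

/-- The equivalence of `Heis r` with triples over `ZMod r`. -/
def equivProd (r : ℕ) : Heis r ≃ ZMod r × ZMod r × ZMod r where
  toFun a := (a.x, a.y, a.z)
  invFun t := ⟨t.1, t.2.1, t.2.2⟩
  left_inv _ := rfl
  right_inv _ := rfl

theorem natCard (r : ℕ) : Nat.card (Heis r) = r ^ 3 := by
  rw [Nat.card_congr (equivProd r), Nat.card_prod, Nat.card_prod, Nat.card_zmod]
  ring

theorem heisMap_surjective {r s : ℕ} (hd : s ∣ r) : Function.Surjective (heisMap hd) := by
  rintro ⟨x, y, z⟩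
  obtain ⟨x, rfl⟩ := ZMod.castHom_surjective hd x
  obtain ⟨y, rfl⟩ := ZMod.castHom_surjective hd y
  obtain ⟨z, rfl⟩ := ZMod.castHom_surjective hd z
  exact ⟨⟨x, y, z⟩, rfl⟩

/-- The commutator with `h`, read off in the central coordinate. -/
def commHom {r : ℕ} (h : Heis r) : Heis r →* Multiplicative (ZMod r) where
  toFun g := Multiplicative.ofAdd (h.x * g.z - g.x * h.z)
  map_one' := by simp
  map_mul' a b := by
    rw [← ofAdd_add, mul_x, mul_z]
    congr 1
    ring

theorem commHom_apply {r : ℕ} (h g : Heis r) :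
    commHom h g = Multiplicative.ofAdd (h.x * g.z - g.x * h.z) := rfl

theorem commute_iff_s10 {r : ℕ} (h g : Heis r) : h * g = g * h ↔ h.x * g.z - g.x * h.z = 0 := by
  rw [Heis.ext_iff, mul_x, mul_y, mul_z, mul_x, mul_y, mul_z, sub_eq_zero, add_comm h.x,
    add_comm h.y, add_comm h.z]
  simp

theorem ker_commHom {r : ℕ} (h : Heis r) : (commHom h).ker = Subgroup.centralizer {h} := by
  ext g
  rw [MonoidHom.mem_ker, Subgroup.mem_centralizer_singleton_iff, commHom_apply, ofAdd_eq_one,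
    ← commute_iff_s10, eq_comm]

theorem commHom_heisMap {r s : ℕ} (hd : s ∣ r) (h g : Heis r) :
    commHom (heisMap hd h) (heisMap hd g) =
      (ZMod.castHom hd (ZMod s)).toAddMonoidHom.toMultiplicative (commHom h g) := by
  refine congrArg Multiplicative.ofAdd
    (Eq.symm (?_ : ZMod.castHom hd (ZMod s) (h.x * g.z - g.x * h.z) = _))
  rw [map_sub, map_mul, map_mul]
  rfl

/-- The image of `commHom h` is closed under multiplication by scalars. -/
theorem exists_commHom_eq_mul {r : ℕ} (h g : Heis r) (s : ZMod r) :
    ∃ g', commHom h g' = Multiplicative.ofAdd ((h.x * g.z - g.x * h.z) * s) :=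
  ⟨⟨g.x * s, 0, g.z * s⟩, by
    rw [commHom_apply]
    congr 1
    ring⟩

end Heis

/-- Every nonzero element of `ZMod (p ^ n)` divides the kernel of reduction mod `p ^ (n - 1)`. -/
theorem ZMod.dvd_of_castHom_eq_zero {p n : ℕ} (hp : p.Prime) {t u : ZMod (p ^ n)} (ht : t ≠ 0)
    (hu : ZMod.castHom (pow_dvd_pow p (Nat.sub_le n 1)) (ZMod (p ^ (n - 1))) u = 0) : t ∣ u := by
  have : NeZero (p ^ n) := ⟨pow_ne_zero _ hp.ne_zero⟩
  obtain ⟨k, hk, hgcd⟩ := (Nat.dvd_prime_pow hp).1 (Nat.gcd_dvd_right t.val (p ^ n))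
  have hkn : k ≠ n := by
    rintro rfl
    have hdvd : p ^ k ∣ t.val := hgcd.symm.dvd.trans (Nat.gcd_dvd_left t.val (p ^ k))
    exact ht ((ZMod.val_eq_zero t).1 (Nat.eq_zero_of_dvd_of_lt hdvd t.val_lt))
  have htk : t ∣ ((p ^ k : ℕ) : ZMod (p ^ n)) := ⟨t⁻¹, by rw [ZMod.mul_inv_eq_gcd, hgcd]⟩
  rw [← ZMod.natCast_zmod_val u, map_natCast, ZMod.natCast_eq_zero_iff] at hu
  rw [← ZMod.natCast_zmod_val u]
  exact htk.trans (Nat.cast_dvd_cast ((pow_dvd_pow p (by omega)).trans hu))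

theorem ZMod.natCard_ker_castHom {r s : ℕ} (hd : s ∣ r) :
    Nat.card (ZMod.castHom hd (ZMod s)).toAddMonoidHom.toMultiplicative.ker * s = r := by
  have hsurj : Function.Surjective (ZMod.castHom hd (ZMod s)).toAddMonoidHom.toMultiplicative :=
    ZMod.castHom_surjective hd
  have hcard := Subgroup.card_mul_index
    (ZMod.castHom hd (ZMod s)).toAddMonoidHom.toMultiplicative.ker
  rwa [Subgroup.index_ker, MonoidHom.range_eq_top.2 hsurj, Subgroup.card_top,
    Nat.card_congr Multiplicative.toAdd, Nat.card_congr Multiplicative.toAdd, Nat.card_zmod,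
    Nat.card_zmod] at hcard

open Heis in
/-- The commutators of `h` with the preimage of the centralizer of `q h` fill the kernel of
reduction. -/
theorem map_commHom_comap_centralizer {p n : ℕ} (hp : p.Prime) {h : Heis (p ^ n)}
    (hh : h ∉ Subgroup.center (Heis (p ^ n))) :
    ((Subgroup.centralizer {heisQ p n h}).comap (heisQ p n)).map (commHom h) =
      (ZMod.castHom (pow_dvd_pow p (Nat.sub_le n 1))
        (ZMod (p ^ (n - 1)))).toAddMonoidHom.toMultiplicative.ker := by
  have hmem (g : Heis (p ^ n)) :
      g ∈ (Subgroup.centralizer {heisQ p n h}).comap (heisQ p n) ↔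
        commHom h g ∈ (ZMod.castHom (pow_dvd_pow p (Nat.sub_le n 1))
          (ZMod (p ^ (n - 1)))).toAddMonoidHom.toMultiplicative.ker := by
    rw [Subgroup.mem_comap, ← ker_commHom, MonoidHom.mem_ker, MonoidHom.mem_ker, heisQ,
      commHom_heisMap]
  ext u
  constructor
  · rintro ⟨g, hg, rfl⟩
    exact (hmem g).1 hg
  · intro hu
    obtain ⟨g, hg⟩ : ∃ g : Heis (p ^ n), h.x * g.z - g.x * h.z ≠ 0 := by
      by_contra! hzero
      exact hh (Subgroup.mem_center_iff.2 fun g => ((commute_iff_s10 h g).2 (hzero g)).symm)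
    obtain ⟨s, hs⟩ := ZMod.dvd_of_castHom_eq_zero hp hg (u := u.toAdd) hu
    obtain ⟨g', hg'⟩ := exists_commHom_eq_mul h g s
    have hgu : commHom h g' = u := by rw [hg', ← hs, ofAdd_toAdd]
    exact ⟨g', (hmem g').2 (hgu ▸ hu), hgu⟩

theorem index_centralizer_eq {p n : ℕ} (hp : p.Prime) (hn : n ≠ 0) {h : Heis (p ^ n)}
    (hh : h ∉ Subgroup.center (Heis (p ^ n))) :
    (Subgroup.centralizer {h}).index = p * (Subgroup.centralizer {heisQ p n h}).index := by
  have hle : Subgroup.centralizer {h} ≤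
      (Subgroup.centralizer {heisQ p n h}).comap (heisQ p n) := fun g hg => by
    rw [Subgroup.mem_comap, Subgroup.mem_centralizer_singleton_iff, ← map_mul, ← map_mul,
      Subgroup.mem_centralizer_singleton_iff.1 hg]
  have hker : Nat.card (ZMod.castHom (pow_dvd_pow p (Nat.sub_le n 1))
      (ZMod (p ^ (n - 1)))).toAddMonoidHom.toMultiplicative.ker = p := by
    refine Nat.eq_of_mul_eq_mul_right (pow_pos hp.pos (n - 1)) ?_
    rw [ZMod.natCard_ker_castHom, mul_pow_sub_one hn]
  rw [← Subgroup.relIndex_mul_index hle,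
    Subgroup.index_comap_of_surjective _ (f := heisQ p n) (Heis.heisMap_surjective _), ← Heis.ker_commHom h,
    Subgroup.relIndex_ker, map_commHom_comap_centralizer hp hh, hker]

/-- if `h ∈ 𝓗(pⁿ)` is non-central, then `|C(h)| = p² * |C(q(h))|`. -/
theorem statement10 (p n : ℕ) (hp : p.Prime) (hn : 2 ≤ n) (h : Heis (p ^ n))
    (hh : h ∉ Subgroup.center (Heis (p ^ n))) :
    Nat.card (Subgroup.centralizer ({h} : Set (Heis (p ^ n)))) =
      p ^ 2 * Nat.card (Subgroup.centralizer ({heisQ p n h} : Set (Heis (p ^ (n - 1))))) := by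
  have hn0 : n ≠ 0 := by omega
  have hcard := Subgroup.card_mul_index (Subgroup.centralizer {h})
  have hcardQ := Subgroup.card_mul_index (Subgroup.centralizer {heisQ p n h})
  rw [Heis.natCard] at hcard hcardQ
  have hpow : (p ^ n) ^ 3 = p ^ 3 * (p ^ (n - 1)) ^ 3 := by
    rw [← mul_pow, mul_pow_sub_one hn0]
  rw [index_centralizer_eq hp hn0 hh, hpow, ← hcardQ] at hcard
  have hindex : (Subgroup.centralizer {heisQ p n h}).index ≠ 0 := by
    intro h0
    rw [h0, mul_zero] at hcardQ
    exact pow_ne_zero 3 (pow_ne_zero (n - 1) hp.ne_zero) hcardQ.symm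
  refine Nat.eq_of_mul_eq_mul_right (Nat.mul_pos hp.pos (Nat.pos_of_ne_zero hindex)) ?_
  rw [hcard]
  ring
end

section
/- Let p be a prime and n ≥ 1. Suppose x = (x₁, x₂, x₃) ∈ 𝓗(pⁿ) is non-degenerate, i.e. p does not divide x₁ or p does not divide x₃ (as elements of ℤ/pⁿℤ). Then for every y ∈ 𝓗(pⁿ): y lies in the centralizer C(x) if and only if there exists a unique integer k with 0 ≤ k < pⁿ such that y·(x^k)⁻¹ lies in the center Z(𝓗(pⁿ)). -/
namespace Heis

variable {r : ℕ}

@[simp] theorem pow_x (a : Heis r) (k : ℕ) : (a ^ k).x = k * a.x := by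
  induction k with
  | zero => simp
  | succ k ih => rw [pow_succ, mul_x, ih]; push_cast; ring

@[simp] theorem pow_z (a : Heis r) (k : ℕ) : (a ^ k).z = k * a.z := by
  induction k with
  | zero => simp
  | succ k ih => rw [pow_succ, mul_z, ih]; push_cast; ring

theorem mul_comm_iff (a b : Heis r) : a * b = b * a ↔ a.x * b.z = b.x * a.z := by
  rw [Heis.ext_iff]
  simp only [mul_x, mul_y, mul_z, add_comm b.x, add_comm b.y, add_comm b.z, add_right_inj,
    true_and, and_true]

theorem mem_centralizer_singleton_iff (a b : Heis r) :
    b ∈ Subgroup.centralizer ({a} : Set (Heis r)) ↔ a.x * b.z = b.x * a.z := by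
  rw [Subgroup.mem_centralizer_singleton_iff, eq_comm, mul_comm_iff]

theorem mem_center_iff (a : Heis r) :
    a ∈ Subgroup.center (Heis r) ↔ a.x = 0 ∧ a.z = 0 := by
  simp only [Subgroup.mem_center_iff, mul_comm_iff]
  refine ⟨fun h => ⟨?_, ?_⟩, fun ⟨hx, hz⟩ g => by simp [hx, hz]⟩
  · simpa using (h ⟨0, 0, 1⟩).symm
  · simpa using h ⟨1, 0, 0⟩

theorem mul_inv_pow_mem_center_iff (a b : Heis r) (k : ℕ) :
    b * (a ^ k)⁻¹ ∈ Subgroup.center (Heis r) ↔ b.x = k * a.x ∧ b.z = k * a.z := by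
  simp [mem_center_iff, ← sub_eq_add_neg, sub_eq_zero]

end Heis

theorem ZMod.isUnit_of_not_prime_dvd {p n : ℕ} (hp : p.Prime) {a : ZMod (p ^ n)}
    (ha : ¬ (p : ZMod (p ^ n)) ∣ a) : IsUnit a := by
  have : NeZero (p ^ n) := ⟨pow_ne_zero n hp.ne_zero⟩
  rw [← ZMod.natCast_zmod_val a] at ha ⊢
  rw [ZMod.isUnit_iff_coprime]
  refine Nat.Coprime.pow_right n (((Nat.Prime.coprime_iff_not_dvd hp).2 fun h => ha ?_).symm)
  exact Nat.cast_dvd_cast h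

theorem ZMod.existsUnique_natCast_eq {r : ℕ} [NeZero r] (c : ZMod r) :
    ∃! k : ℕ, k < r ∧ (k : ZMod r) = c := by
  refine ⟨c.val, ⟨c.val_lt, ZMod.natCast_zmod_val c⟩, ?_⟩
  rintro k ⟨hk, rfl⟩
  exact (ZMod.val_cast_of_lt hk).symm

/-- If `a` is a unit and `a * d = b * c`, then `(b, d) = t • (a, c)` exactly when `t = b / a`. -/
theorem IsUnit.eq_mul_and_eq_mul_iff {R : Type*} [CommRing R] {a : R} (ha : IsUnit a)
    {b c d : R} (h : a * d = b * c) (t : R) :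
    b = t * a ∧ d = t * c ↔ t = b * ↑ha.unit⁻¹ := by
  rw [Units.eq_mul_inv_iff_mul_eq, IsUnit.unit_spec]
  refine ⟨fun h' => h'.1.symm, fun h' => ⟨h'.symm, ha.mul_left_cancel ?_⟩⟩
  rw [h, ← h']
  ring

/-- if `x ∈ 𝓗(pⁿ)` is non-degenerate (`p ∤ x₁` or `p ∤ x₃` in `ℤ/pⁿℤ`), then for
every `y`: `y ∈ C(x)` iff there is a unique `0 ≤ k < pⁿ` with `y * (x^k)⁻¹ ∈ Z(𝓗(pⁿ))`. -/
theorem statement13 (p n : ℕ) (hp : p.Prime) (hn : 1 ≤ n) (x : Heis (p ^ n))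
    (hx : ¬ (p : ZMod (p ^ n)) ∣ x.x ∨ ¬ (p : ZMod (p ^ n)) ∣ x.z) (y : Heis (p ^ n)) :
    y ∈ Subgroup.centralizer ({x} : Set (Heis (p ^ n))) ↔
      ∃! k : ℕ, k < p ^ n ∧ y * (x ^ k)⁻¹ ∈ Subgroup.center (Heis (p ^ n)) := by
  have : NeZero (p ^ n) := ⟨pow_ne_zero n hp.ne_zero⟩
  simp only [Heis.mem_centralizer_singleton_iff, Heis.mul_inv_pow_mem_center_iff]
  constructor
  · intro h
    rcases hx with hx | hx
    · simp only [(ZMod.isUnit_of_not_prime_dvd hp hx).eq_mul_and_eq_mul_iff h]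
      exact ZMod.existsUnique_natCast_eq _
    · have h' : x.z * y.x = y.z * x.x := by rw [mul_comm, ← h, mul_comm]
      simp only [and_comm (a := y.x = _),
        (ZMod.isUnit_of_not_prime_dvd hp hx).eq_mul_and_eq_mul_iff h']
      exact ZMod.existsUnique_natCast_eq _
  · rintro ⟨k, ⟨-, hkx, hkz⟩, -⟩
    rw [hkx, hkz]
    ring
end

section
/- Let 1 → G₁ →f G →q G₂ → 1 be a short exact sequence of finite groups. For every subgroup H of G₂, the pseudo Chermak-Delgado measure satisfies m_s(q⁻¹(H)) = m(H) · |G₁|², where m(H) = |H| · |C_{G₂}(H)| is the Chermak-Delgado measure of H in G₂. -/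
theorem Subgroup.card_comap_of_surjective {G K : Type*} [Group G] [Group K] {q : G →* K}
    (hq : Function.Surjective q) (H : Subgroup K) :
    Nat.card (H.comap q) = Nat.card q.ker * Nat.card H := by
  have h := Subgroup.relIndex_mul_relIndex ⊥ q.ker (H.comap q) bot_le (q.ker_le_comap H)
  rwa [Subgroup.relIndex_bot_left, Subgroup.relIndex_bot_left, Subgroup.relIndex_ker,
    Subgroup.map_comap_eq_self_of_surjective hq, eq_comm] at h

/-- The pseudocentralizer of a preimage is the preimage of the centralizer. -/
theorem pseudocentralizer_comap {G K : Type*} [Group G] [Group K] {q : G →* K}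
    (hq : Function.Surjective q) (H : Subgroup K) :
    pseudocentralizer q (H.comap q : Set G) = (Subgroup.centralizer (H : Set K)).comap q := by
  ext g
  simp only [mem_pseudocentralizer_iff, pc_mem_ker_iff, Subgroup.mem_comap,
    Subgroup.mem_centralizer_iff, SetLike.mem_coe, hq.forall, commute_iff_eq]

/-- for a short exact sequence `1 → G₁ → G → G₂ → 1` of finite groups and any
subgroup `H ≤ G₂`: `m_s(q⁻¹(H)) = m(H) * |G₁|²`. -/
theorem statement16 {G₁ G G₂ : Type*} [Group G₁] [Group G] [Group G₂]
    [Finite G₁] [Finite G] [Finite G₂]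
    (f : G₁ →* G) (q : G →* G₂) (hf : Function.Injective f) (hq : Function.Surjective q)
    (hfq : f.range = q.ker) (H : Subgroup G₂) :
    Nat.card (H.comap q) *
        Nat.card (pseudocentralizer q ((H.comap q : Subgroup G) : Set G)) =
      (Nat.card H * Nat.card (Subgroup.centralizer (H : Set G₂))) * Nat.card G₁ ^ 2 := by
  have hcard : Nat.card q.ker = Nat.card G₁ := by
    rw [← hfq]
    exact (Nat.card_congr (MonoidHom.ofInjective hf).toEquiv).symm
  rw [pseudocentralizer_comap hq, Subgroup.card_comap_of_surjective hq,
    Subgroup.card_comap_of_surjective hq, hcard]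
  ring
end
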